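/- arXiv:2108.02857 — 2 statements merged into one kernel-verified Lean document; each statement's English description precedes it below -/
import Mathlib

section
/- For every θ > 0 and every T ≥ 1, the variance of 2θ·Y₁₁(T)/T satisfies Var(2θ·Y₁₁(T)/T) ≤ [(4/θ)(3 + 7/(4θ)) + 64/θ²] · (1/T). -/
open MeasureTheory ProbabilityTheory Real Filter Finset
open scoped Topology ENNReal NNReal

noncomputable section

/-- Kolmogorov distance between two Borel measures on `ℝ`. -/
def dKol (μ ν : Measure ℝ) : ℝ :=
  ⨆ z : ℝ, |(μ (Set.Iic z)).toReal - (ν (Set.Iic z)).toReal|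

/-- `X 0, X 1 : ℝ → Ω → ℝ` is a pair of independent centered Gaussian processes,
started at `0`, with almost surely continuous paths on `[0,∞)` and the
Ornstein–Uhlenbeck covariance `E[Xᵢ(s)Xᵢ(t)] = (e^{−θ|t−s|} − e^{−θ(t+s)})/(2θ)`. -/
structure IsOUPair {Ω : Type} [MeasureSpace Ω] (θ : ℝ) (X : Fin 2 → ℝ → Ω → ℝ) : Prop where
  meas : ∀ i t, Measurable (X i t)
  gaussian : ∀ (i : Fin 2) (n : ℕ) (t : Fin n → ℝ) (c : Fin n → ℝ), (∀ j, 0 ≤ t j) →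
      ∃ v : NNReal, Measure.map (fun ω => ∑ j, c j * X i (t j) ω) ℙ = gaussianReal 0 v
  indep : IndepFun (fun ω t => X 0 t ω) (fun ω t => X 1 t ω) ℙ
  cont : ∀ᵐ ω ∂(ℙ : Measure Ω), ∀ i, ContinuousOn (fun t => X i t ω) (Set.Ici 0)
  init : ∀ i ω, X i 0 ω = 0
  cov : ∀ (i : Fin 2) (s t : ℝ), 0 ≤ s → 0 ≤ t →
      ∫ ω, X i s ω * X i t ω ∂ℙ
        = (Real.exp (-θ * |t - s|) - Real.exp (-θ * (t + s))) / (2 * θ)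

variable {Ω : Type} [MeasureSpace Ω]

/-- `F_T := T^{-1/2} ∫₀^T X₁(u) X₂(u) du`. -/
def ouF (X : Fin 2 → ℝ → Ω → ℝ) (T : ℝ) (ω : Ω) : ℝ :=
  (1 / Real.sqrt T) * ∫ u in (0:ℝ)..T, X 0 u ω * X 1 u ω

/-- `X̄ᵢ(T) := T^{-1} ∫₀^T Xᵢ(u) du`. -/
def ouXbar (X : Fin 2 → ℝ → Ω → ℝ) (i : Fin 2) (T : ℝ) (ω : Ω) : ℝ :=
  (1 / T) * ∫ u in (0:ℝ)..T, X i u ω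

/-- `Y_{ij}(T) := ∫₀^T Xᵢ(u)Xⱼ(u) du − T·X̄ᵢ(T)·X̄ⱼ(T)`. -/
def ouY (X : Fin 2 → ℝ → Ω → ℝ) (i j : Fin 2) (T : ℝ) (ω : Ω) : ℝ :=
  (∫ u in (0:ℝ)..T, X i u ω * X j u ω) - T * ouXbar X i T ω * ouXbar X j T ω

/-- Yule's nonsense correlation `ρ(T)`. -/
def ouRho (X : Fin 2 → ℝ → Ω → ℝ) (T : ℝ) (ω : Ω) : ℝ :=
  ouY X 0 1 T ω / Real.sqrt (ouY X 0 0 T ω * ouY X 1 1 T ω)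

/-- `A(n) := (√Tₙ/n) Σ_{k<n} X₁(kΔ)X₂(kΔ)` with `Tₙ = nΔ`. -/
def ouA (X : Fin 2 → ℝ → Ω → ℝ) (n : ℕ) (Δ : ℝ) (ω : Ω) : ℝ :=
  (Real.sqrt (n * Δ) / n) * ∑ k ∈ Finset.range n, X 0 (k * Δ) ω * X 1 (k * Δ) ω

/-- `X̃ᵢ(n) := n^{-1} Σ_{k<n} Xᵢ(kΔ)`. -/
def ouXtilde (X : Fin 2 → ℝ → Ω → ℝ) (i : Fin 2) (n : ℕ) (Δ : ℝ) (ω : Ω) : ℝ :=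
  (1 / n) * ∑ k ∈ Finset.range n, X i (k * Δ) ω

/-- `Ỹ_{ij}(n) := Δ Σ_{k<n} Xᵢ(kΔ)Xⱼ(kΔ) − Tₙ·X̃ᵢ(n)·X̃ⱼ(n)` with `Tₙ = nΔ`. -/
def ouYtilde (X : Fin 2 → ℝ → Ω → ℝ) (i j : Fin 2) (n : ℕ) (Δ : ℝ) (ω : Ω) : ℝ :=
  Δ * ∑ k ∈ Finset.range n, X i (k * Δ) ω * X j (k * Δ) ω
    - (n * Δ) * ouXtilde X i n Δ ω * ouXtilde X j n Δ ω

/-- Yule's discrete nonsense correlation `ρ̃(n)`. -/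
def ouRhoTilde (X : Fin 2 → ℝ → Ω → ℝ) (n : ℕ) (Δ : ℝ) (ω : Ω) : ℝ :=
  ouYtilde X 0 1 n Δ ω / Real.sqrt (ouYtilde X 0 0 n Δ ω * ouYtilde X 1 1 n Δ ω)


theorem aux_deriv (v a b c d e : ℝ) (t : ℝ) :
    HasDerivAt (fun t : ℝ => (a + b * t + c * t ^ 2 + d * t ^ 3 + e * t ^ 4) * rexp (v * t ^ 2 / 2))
      ((b + 2 * c * t + 3 * d * t ^ 2 + 4 * e * t ^ 3 +
        v * t * (a + b * t + c * t ^ 2 + d * t ^ 3 + e * t ^ 4)) * rexp (v * t ^ 2 / 2)) t := by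
  have hid := hasDerivAt_id t
  have h1 : HasDerivAt (fun t : ℝ => a + b * t + c * t ^ 2 + d * t ^ 3 + e * t ^ 4)
      (b + 2 * c * t + 3 * d * t ^ 2 + 4 * e * t ^ 3) t := by
    have := ((((hid.const_mul b).const_add a).add ((hasDerivAt_pow 2 t).const_mul c)).add
      ((hasDerivAt_pow 3 t).const_mul d)).add ((hasDerivAt_pow 4 t).const_mul e)
    refine HasDerivAt.congr_deriv (this.congr_of_eventuallyEq ?_) ?_
    · exact Eventually.of_forall fun x => by simp
    · push_cast; ring
  have h2 : HasDerivAt (fun t : ℝ => rexp (v * t ^ 2 / 2)) (rexp (v * t ^ 2 / 2) * (v * t)) t := by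
    have := (((hasDerivAt_pow 2 t).const_mul v).div_const 2).exp
    refine this.congr_deriv ?_
    push_cast; ring
  refine (h1.mul h2).congr_deriv ?_
  ring

theorem aux_deriv' (v a b c d e : ℝ) :
    deriv (fun t : ℝ => (a + b * t + c * t ^ 2 + d * t ^ 3 + e * t ^ 4) * rexp (v * t ^ 2 / 2)) =
      fun t => (b + 2 * c * t + 3 * d * t ^ 2 + 4 * e * t ^ 3 +
        v * t * (a + b * t + c * t ^ 2 + d * t ^ 3 + e * t ^ 4)) * rexp (v * t ^ 2 / 2) :=
  funext fun t => (aux_deriv v a b c d e t).deriv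

theorem gauss_fourth (v : ℝ≥0) : ∫ x, x ^ 4 ∂(gaussianReal 0 v) = 3 * (v : ℝ) ^ 2 := by
  have h : ∫ x, x ^ 4 ∂(gaussianReal 0 v)
      = iteratedDeriv 4 (mgf (fun x ↦ x) (gaussianReal 0 v)) 0 := by
    rw [iteratedDeriv_mgf_zero] <;> simp
  rw [h, mgf_fun_id_gaussianReal]
  rw [iteratedDeriv_succ, iteratedDeriv_succ, iteratedDeriv_succ, iteratedDeriv_one]
  have e0 : (fun t : ℝ => rexp (0 * t + (v : ℝ) * t ^ 2 / 2)) =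
      fun t : ℝ => (1 + 0 * t + 0 * t ^ 2 + 0 * t ^ 3 + 0 * t ^ 4) * rexp ((v : ℝ) * t ^ 2 / 2) := by
    funext t; simp
  rw [e0, aux_deriv']
  have e1 : (fun t : ℝ => ((0:ℝ) + 2 * 0 * t + 3 * 0 * t ^ 2 + 4 * 0 * t ^ 3 +
        v * t * (1 + 0 * t + 0 * t ^ 2 + 0 * t ^ 3 + 0 * t ^ 4)) * rexp ((v:ℝ) * t ^ 2 / 2)) =
      fun t : ℝ => (0 + v * t + 0 * t ^ 2 + 0 * t ^ 3 + 0 * t ^ 4) * rexp ((v : ℝ) * t ^ 2 / 2) := by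
    funext t; ring
  rw [e1, aux_deriv']
  have e2 : (fun t : ℝ => ((v:ℝ) + 2 * 0 * t + 3 * 0 * t ^ 2 + 4 * 0 * t ^ 3 +
        v * t * (0 + v * t + 0 * t ^ 2 + 0 * t ^ 3 + 0 * t ^ 4)) * rexp ((v:ℝ) * t ^ 2 / 2)) =
      fun t : ℝ => (v + 0 * t + (v:ℝ)^2 * t ^ 2 + 0 * t ^ 3 + 0 * t ^ 4) *
        rexp ((v : ℝ) * t ^ 2 / 2) := by
    funext t; ring
  rw [e2, aux_deriv']
  have e3 : (fun t : ℝ => ((0:ℝ) + 2 * (v:ℝ)^2 * t + 3 * 0 * t ^ 2 + 4 * 0 * t ^ 3 +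
        v * t * (v + 0 * t + (v:ℝ)^2 * t ^ 2 + 0 * t ^ 3 + 0 * t ^ 4)) * rexp ((v:ℝ) * t ^ 2 / 2)) =
      fun t : ℝ => (0 + (3 * (v:ℝ)^2) * t + 0 * t ^ 2 + (v:ℝ)^3 * t ^ 3 + 0 * t ^ 4) *
        rexp ((v : ℝ) * t ^ 2 / 2) := by
    funext t; ring
  rw [e3, aux_deriv']
  simp

theorem gauss_second (v : ℝ≥0) : ∫ x, x ^ 2 ∂(gaussianReal 0 v) = (v : ℝ) := by
  have h := variance_fun_id_gaussianReal (μ := 0) (v := v)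
  rw [variance_eq_integral measurable_id'.aemeasurable] at h
  simpa using h

/-- centered Gaussian random variable -/
def IsCG {Ω : Type} [MeasurableSpace Ω] (P : Measure Ω) (U : Ω → ℝ) : Prop :=
  Measurable U ∧ ∃ v : NNReal, Measure.map U P = gaussianReal 0 v

theorem IsCG.memLp {Ω : Type} [MeasurableSpace Ω] {P : Measure Ω} {U : Ω → ℝ} (h : IsCG P U)
    (p : ℝ≥0) : MemLp U p P := by
  obtain ⟨hm, v, hv⟩ := h
  have := memLp_id_gaussianReal (μ := 0) (v := v) p
  rw [← hv, memLp_map_measure_iff (by fun_prop) hm.aemeasurable] at this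
  simpa using this

theorem IsCG.fourth {Ω : Type} [MeasurableSpace Ω] {P : Measure Ω} {U : Ω → ℝ} (h : IsCG P U) :
    ∫ ω, U ω ^ 4 ∂P = 3 * (∫ ω, U ω ^ 2 ∂P) ^ 2 := by
  obtain ⟨hm, v, hv⟩ := h
  have h4 := gauss_fourth v
  have h2 := gauss_second v
  rw [← hv, integral_map hm.aemeasurable (by fun_prop)] at h4 h2
  rw [h4, h2]

theorem IsCG.memLp_mul {Ω : Type} [MeasurableSpace Ω] {P : Measure Ω} {U V : Ω → ℝ} (h : IsCG P U)
    (h' : IsCG P V) : MemLp (fun ω => U ω * V ω) 2 P := by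
  have h4 := h.memLp 4
  have h4' := h'.memLp 4
  have : ENNReal.HolderTriple ((4:ℝ≥0):ℝ≥0∞) ((4:ℝ≥0):ℝ≥0∞) 2 := by
    constructor
    have h8 : (((4:ℝ≥0):ℝ≥0∞)) = 2 * 2 := by norm_num
    rw [h8, ENNReal.mul_inv (by simp) (by simp), ← mul_add, ENNReal.inv_two_add_inv_two, mul_one]
  exact h4'.mul h4

theorem IsCG.int_mul {Ω : Type} [MeasurableSpace Ω] {P : Measure Ω} [IsProbabilityMeasure P]
    {U V : Ω → ℝ} (h : IsCG P U)
    (h' : IsCG P V) : Integrable (fun ω => U ω * V ω) P := by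
  exact (h.memLp_mul h').integrable (by norm_num)

theorem cov_sq {Ω : Type} [MeasurableSpace Ω] {P : Measure Ω} [IsProbabilityMeasure P]
    {Z W : Ω → ℝ} (hZ : IsCG P Z) (hW : IsCG P W) (hp : IsCG P (fun ω => Z ω + W ω))
    (hm : IsCG P (fun ω => Z ω - W ω)) :
    cov[fun ω => Z ω * Z ω, fun ω => W ω * W ω; P] = 2 * (∫ ω, Z ω * W ω ∂P) ^ 2 := by
  rw [covariance_eq_sub (hZ.memLp_mul hZ) (hW.memLp_mul hW)]
  have i1 := hZ.int_mul hZ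
  have i2 := hZ.int_mul hW
  have i3 := hW.int_mul hW
  have j1 : Integrable (fun ω => (Z ω * Z ω) * (Z ω * Z ω)) P :=
    (hZ.memLp_mul hZ).integrable_mul (hZ.memLp_mul hZ)
  have j2 : Integrable (fun ω => (Z ω * Z ω) * (W ω * W ω)) P :=
    (hZ.memLp_mul hZ).integrable_mul (hW.memLp_mul hW)
  have j3 : Integrable (fun ω => (W ω * W ω) * (W ω * W ω)) P :=
    (hW.memLp_mul hW).integrable_mul (hW.memLp_mul hW)
  have j4 : Integrable (fun ω => (Z ω + W ω) ^ 4) P := by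
    refine ((hp.memLp_mul hp).integrable_mul (hp.memLp_mul hp)).congr ?_
    exact Eventually.of_forall fun ω => by simp; ring
  have j5 : Integrable (fun ω => (Z ω - W ω) ^ 4) P := by
    refine ((hm.memLp_mul hm).integrable_mul (hm.memLp_mul hm)).congr ?_
    exact Eventually.of_forall fun ω => by simp; ring
  have f1 := hZ.fourth
  have f2 := hW.fourth
  have f3 := hp.fourth
  have f4 := hm.fourth
  have s1 : ∫ ω, (Z ω + W ω) ^ 2 ∂P = (∫ ω, Z ω * Z ω ∂P) + 2 * (∫ ω, Z ω * W ω ∂P)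
      + ∫ ω, W ω * W ω ∂P := by
    rw [← integral_const_mul, ← integral_add i1 (i2.const_mul 2),
      ← integral_add (by exact i1.add (i2.const_mul 2)) i3]
    congr 1; ext ω; ring
  have s2 : ∫ ω, (Z ω - W ω) ^ 2 ∂P = (∫ ω, Z ω * Z ω ∂P) - 2 * (∫ ω, Z ω * W ω ∂P)
      + ∫ ω, W ω * W ω ∂P := by
    rw [← integral_const_mul, ← integral_sub i1 (i2.const_mul 2),
      ← integral_add (by exact i1.sub (i2.const_mul 2)) i3]
    congr 1; ext ω; ring
  have s3 : (∫ ω, (Z ω + W ω) ^ 4 ∂P) + (∫ ω, (Z ω - W ω) ^ 4 ∂P)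
      = 2 * (∫ ω, (Z ω * Z ω) * (Z ω * Z ω) ∂P) + 12 * (∫ ω, (Z ω * Z ω) * (W ω * W ω) ∂P)
        + 2 * ∫ ω, (W ω * W ω) * (W ω * W ω) ∂P := by
    rw [← integral_const_mul, ← integral_const_mul, ← integral_const_mul, ← integral_add j4 j5,
      ← integral_add (j1.const_mul 2) (j2.const_mul 12),
      ← integral_add (by exact (j1.const_mul 2).add (j2.const_mul 12)) (j3.const_mul 2)]
    congr 1; ext ω; ring
  have e1 : ∫ ω, Z ω ^ 4 ∂P = ∫ ω, (Z ω * Z ω) * (Z ω * Z ω) ∂P := by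
    congr 1; ext ω; ring
  have e2 : ∫ ω, W ω ^ 4 ∂P = ∫ ω, (W ω * W ω) * (W ω * W ω) ∂P := by
    congr 1; ext ω; ring
  have e3 : ∫ ω, Z ω ^ 2 ∂P = ∫ ω, Z ω * Z ω ∂P := by
    congr 1; ext ω; ring
  have e4 : ∫ ω, W ω ^ 2 ∂P = ∫ ω, W ω * W ω ∂P := by
    congr 1; ext ω; ring
  rw [e1, e3] at f1
  rw [e2, e4] at f2
  rw [f3, f4, s1, s2, f1, f2] at s3
  have e5 : ∫ ω, ((fun ω => Z ω * Z ω) * (fun ω => W ω * W ω)) ω ∂P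
    = ∫ ω, (Z ω * Z ω) * (W ω * W ω) ∂P := rfl
  rw [e5]
  linear_combination (-1/12) * s3

theorem center_sq {n : ℕ} (a : Fin n → ℝ) (m : ℝ) (hm : n * m = ∑ k, a k) :
    ∑ k, (a k - m) ^ 2 ≤ ∑ k, a k ^ 2 := by
  have : ∑ k, (a k - m) ^ 2 = ∑ k, a k ^ 2 - 2 * m * ∑ k, a k + n * m ^ 2 := by
    simp only [sub_sq, Finset.sum_add_distrib, Finset.sum_sub_distrib, Finset.mul_sum]
    simp
    congr 1; ext; ring
  rw [this, ← hm]
  nlinarith [mul_nonneg (Nat.cast_nonneg (α := ℝ) n) (sq_nonneg m)]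

theorem discrete_var {Ω : Type} [MeasurableSpace Ω] {P : Measure Ω} [IsProbabilityMeasure P]
    {n : ℕ} (hn : n ≠ 0) (x : Fin n → Ω → ℝ)
    (hx : ∀ c : Fin n → ℝ, IsCG P (fun ω => ∑ j, c j * x j ω)) :
    MemLp (fun ω => ∑ j, (x j ω - (1 / n) * ∑ k, x k ω) * (x j ω - (1 / n) * ∑ k, x k ω)) 2 P ∧
    variance (fun ω => ∑ j, (x j ω - (1 / n) * ∑ k, x k ω) * (x j ω - (1 / n) * ∑ k, x k ω)) P
      ≤ 2 * ∑ j, ∑ k, (∫ ω, x j ω * x k ω ∂P) ^ 2 := by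
  have hn' : (n:ℝ) ≠ 0 := by exact_mod_cast hn
  set Z : Fin n → Ω → ℝ := fun j ω => x j ω - (1 / n) * ∑ k, x k ω with hZ
  have hxG : ∀ j, IsCG P (x j) := fun j => by
    have := hx (fun k => if k = j then 1 else 0)
    simpa using this
  have hZG : ∀ j, IsCG P (Z j) := fun j => by
    have := hx (fun k => (if k = j then 1 else 0) - 1 / n)
    simpa [sub_mul, Finset.sum_sub_distrib, ← Finset.mul_sum, hZ] using this
  have hZp : ∀ j l, IsCG P (fun ω => Z j ω + Z l ω) := fun j l => by
    have := hx (fun k => ((if k = j then 1 else 0) - 1 / n) + ((if k = l then 1 else 0) - 1 / n))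
    simpa [sub_mul, add_mul, Finset.sum_add_distrib, Finset.sum_sub_distrib, ← Finset.mul_sum, hZ]
      using this
  have hZm : ∀ j l, IsCG P (fun ω => Z j ω - Z l ω) := fun j l => by
    have := hx (fun k => ((if k = j then 1 else 0) - 1 / n) - ((if k = l then 1 else 0) - 1 / n))
    simpa only [sub_mul, Finset.sum_sub_distrib, ← Finset.mul_sum, hZ, ite_mul, one_mul, zero_mul,
      Finset.sum_ite_eq', Finset.mem_univ, if_true] using this
  refine ⟨memLp_finsetSum _ fun j _ => (hZG j).memLp_mul (hZG j), ?_⟩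
  have hv := variance_fun_sum (μ := P) (X := fun j ω => Z j ω * Z j ω)
    (fun j => (hZG j).memLp_mul (hZG j))
  change variance (fun ω => ∑ j, Z j ω * Z j ω) P ≤ _
  rw [hv]
  simp_rw [fun j k => cov_sq (hZG j) (hZG k) (hZp j k) (hZm j k), ← Finset.mul_sum]
  have a1 : ∀ j k, ∫ ω, x j ω * Z k ω ∂P
      = (∫ ω, x j ω * x k ω ∂P) - (1 / n) * ∑ l, ∫ ω, x j ω * x l ω ∂P := fun j k => by
    rw [← integral_finsetSum _ (fun l _ => (hxG j).int_mul (hxG l)), ← integral_const_mul,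
      ← integral_sub ((hxG j).int_mul (hxG k))
        ((integrable_finsetSum _ (fun l _ => (hxG j).int_mul (hxG l))).const_mul _)]
    congr 1; ext ω
    rw [← Finset.mul_sum, hZ]; ring
  have a2 : ∀ j k, ∫ ω, Z j ω * Z k ω ∂P
      = (∫ ω, x j ω * Z k ω ∂P) - (1 / n) * ∑ l, ∫ ω, x l ω * Z k ω ∂P := fun j k => by
    rw [← integral_finsetSum _ (fun l _ => (hxG l).int_mul (hZG k)), ← integral_const_mul,
      ← integral_sub ((hxG j).int_mul (hZG k))
        ((integrable_finsetSum _ (fun l _ => (hxG l).int_mul (hZG k))).const_mul _)]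
    congr 1; ext ω
    rw [← Finset.sum_mul, ← mul_assoc, ← sub_mul]
  have b1 : ∑ j, ∑ k, (∫ ω, Z j ω * Z k ω ∂P) ^ 2 ≤ ∑ j, ∑ k, (∫ ω, x j ω * Z k ω ∂P) ^ 2 := by
    rw [Finset.sum_comm, Finset.sum_comm (f := fun j k => (∫ ω, x j ω * Z k ω ∂P) ^ 2)]
    refine Finset.sum_le_sum fun k _ => ?_
    simp_rw [fun j => a2 j k]
    exact center_sq _ _ (by field_simp)
  have b2 : ∑ j, ∑ k, (∫ ω, x j ω * Z k ω ∂P) ^ 2 ≤ ∑ j, ∑ k, (∫ ω, x j ω * x k ω ∂P) ^ 2 := by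
    refine Finset.sum_le_sum fun j _ => ?_
    simp_rw [a1 j]
    exact center_sq _ _ (by field_simp)
  linarith

theorem riemann_sum {f : ℝ → ℝ} {T : ℝ} (hT : 0 < T) (hf : ContinuousOn f (Set.Icc 0 T)) :
    Tendsto (fun n : ℕ => (T / (n + 1 : ℕ)) * ∑ k : Fin (n + 1), f (k * (T / (n + 1 : ℕ))))
      atTop (𝓝 (∫ u in (0:ℝ)..T, f u)) := by
  have huc := isCompact_Icc.uniformContinuousOn_of_continuous hf
  rw [Metric.tendsto_atTop]
  intro ε hε
  obtain ⟨δ, hδ, hd⟩ := Metric.uniformContinuousOn_iff.mp huc (ε / (2 * T)) (by positivity)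
  obtain ⟨N, hN⟩ := exists_nat_gt (T / δ)
  refine ⟨N, fun n hn => ?_⟩
  set m := n + 1 with hm
  have hm0 : (0:ℝ) < m := by rw [hm]; positivity
  set D := T / (m:ℕ) with hD
  have hD0 : 0 < D := by positivity
  have hDm : m * D = T := by rw [hD]; field_simp
  have hDδ : D < δ := by
    rw [hD, div_lt_iff₀ hm0]
    rw [div_lt_iff₀ hδ] at hN
    have : (N:ℝ) ≤ m := by rw [hm]; exact_mod_cast Nat.le_succ_of_le hn
    nlinarith
  have hsub : ∀ k < m, Set.Icc ((k:ℝ) * D) ((k + 1 : ℕ) * D) ⊆ Set.Icc 0 T := by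
    intro k hk u hu
    have h1 : ((k + 1 : ℕ):ℝ) ≤ m := by exact_mod_cast hk
    have h2 := mul_le_mul_of_nonneg_right h1 hD0.le
    exact ⟨le_trans (by positivity) hu.1, hu.2.trans (by linarith)⟩
  have hle : ∀ k : ℕ, (k:ℝ) * D ≤ (k + 1 : ℕ) * D := fun k => by push_cast; nlinarith
  have hint : ∀ k < m, IntervalIntegrable f volume ((k:ℝ) * D) ((k + 1 : ℕ) * D) := by
    intro k hk
    apply ContinuousOn.intervalIntegrable
    rw [Set.uIcc_of_le (hle k)]
    exact hf.mono (hsub k hk)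
  have hsum := intervalIntegral.sum_integral_adjacent_intervals (a := fun k : ℕ => (k:ℝ) * D) hint
  simp only [Nat.cast_zero, zero_mul, hDm] at hsum
  rw [← hsum, Fin.sum_univ_eq_sum_range (fun k => f (k * D)), Finset.mul_sum, Real.dist_eq,
    ← Finset.sum_sub_distrib]
  have hb : ∀ k ∈ Finset.range m, |D * f (k * D) - ∫ u in ((k:ℝ) * D)..((k + 1 : ℕ) * D), f u|
      ≤ ε / (2 * T) * D := by
    intro k hk
    have hk := Finset.mem_range.mp hk
    have hlen : ((k + 1 : ℕ):ℝ) * D - k * D = D := by push_cast; ring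
    have : D * f (k * D) = ∫ u in ((k:ℝ) * D)..((k + 1 : ℕ) * D), f (k * D) := by
      rw [intervalIntegral.integral_const, hlen, smul_eq_mul]
    rw [this, ← intervalIntegral.integral_sub (by simp) (hint k hk)]
    have := intervalIntegral.norm_integral_le_of_norm_le_const (a := (k:ℝ) * D)
      (b := ((k + 1 : ℕ):ℝ) * D) (C := ε / (2 * T)) (f := fun u => f (k * D) - f u) ?_
    · rwa [hlen, abs_of_pos hD0] at this
    · intro u hu
      rw [Set.uIoc_of_le (hle k)] at hu
      have := hd (k * D) (hsub k hk ⟨le_rfl, hle k⟩) u (hsub k hk ⟨hu.1.le, hu.2⟩) (by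
        rw [Real.dist_eq, abs_sub_comm, abs_of_nonneg (by linarith [hu.1])]
        linarith [hu.2])
      exact this.le
  calc _ ≤ ∑ k ∈ Finset.range m, ε / (2 * T) * D :=
        (Finset.abs_sum_le_sum_abs _ _).trans (Finset.sum_le_sum hb)
    _ = ε / (2 * T) * (m * D) := by simp; ring
    _ = ε / 2 := by rw [hDm]; field_simp
    _ < ε := by linarith

theorem fatou_var {Ω : Type} [MeasurableSpace Ω] {P : Measure Ω} [IsProbabilityMeasure P]
    (F : ℕ → Ω → ℝ) (G : Ω → ℝ) (B M : ℝ)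
    (hF : ∀ n, MemLp (F n) 2 P) (hv : ∀ᶠ n in atTop, variance (F n) P ≤ B)
    (hM : ∀ n, |∫ ω, F n ω ∂P| ≤ M)
    (hlim : ∀ᵐ ω ∂P, Tendsto (fun n => F n ω) atTop (𝓝 (G ω))) :
    variance G P ≤ B := by
  have hB : 0 ≤ B := by
    obtain ⟨n, hn⟩ := hv.exists
    exact (variance_nonneg _ _).trans hn
  obtain ⟨m, -, φ, hφ, hm⟩ := isCompact_Icc.tendsto_subseq (x := fun n => ∫ ω, F n ω ∂P)
    (s := Set.Icc (-M) M) (fun n => abs_le.mp (hM n))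
  have hG : AEStronglyMeasurable G P :=
    aestronglyMeasurable_of_tendsto_ae atTop (fun n => (hF n).aestronglyMeasurable) hlim
  have key : ∫⁻ ω, ENNReal.ofReal ((G ω - m) ^ 2) ∂P ≤ ENNReal.ofReal B := by
    have h1 : ∫⁻ ω, ENNReal.ofReal ((G ω - m) ^ 2) ∂P
        = ∫⁻ ω, liminf (fun n => ENNReal.ofReal ((F (φ n) ω - ∫ ω, F (φ n) ω ∂P) ^ 2)) atTop ∂P := by
      refine lintegral_congr_ae ?_
      filter_upwards [hlim] with ω hω
      symm
      apply Tendsto.liminf_eq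
      exact (ENNReal.continuous_ofReal.tendsto _).comp
        (((hω.comp hφ.tendsto_atTop).sub hm).pow 2)
    rw [h1]
    refine (lintegral_liminf_le' fun n => ?_).trans ?_
    · exact (((hF _).aestronglyMeasurable.aemeasurable.sub_const _).pow_const 2).ennreal_ofReal
    · refine liminf_le_of_frequently_le' (Eventually.frequently ?_)
      filter_upwards [hφ.tendsto_atTop.eventually hv] with n hn
      rw [← evariance_eq_lintegral_ofReal, ← ofReal_variance (hF _)]
      exact ENNReal.ofReal_le_ofReal hn
  rw [← variance_sub_const hG m]
  refine (variance_le_expectation_sq (hG.sub aestronglyMeasurable_const)).trans ?_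
  change ∫ ω, (G ω - m) ^ 2 ∂P ≤ B
  rw [integral_eq_lintegral_of_nonneg_ae (Eventually.of_forall fun ω => sq_nonneg _)
    (by exact (hG.sub aestronglyMeasurable_const).pow 2)]
  exact ENNReal.toReal_le_of_le_ofReal hB key

theorem geo_aux (a : ℝ) (ha : 0 < a) (m : ℕ) :
    ∑ k ∈ Finset.range m, rexp (-a * |(k:ℝ) - m|) ≤ rexp (-a) / (1 - rexp (-a)) := by
  have hq : rexp (-a) < 1 := by rw [Real.exp_lt_one_iff]; linarith
  have hq0 := Real.exp_pos (-a)
  induction m with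
  | zero => simp; exact div_nonneg hq0.le (by linarith)
  | succ m ih =>
    rw [Finset.sum_range_succ]
    have h1 : ∑ k ∈ Finset.range m, rexp (-a * |(k:ℝ) - (m + 1 : ℕ)|)
        = rexp (-a) * ∑ k ∈ Finset.range m, rexp (-a * |(k:ℝ) - m|) := by
      rw [Finset.mul_sum]
      refine Finset.sum_congr rfl fun k hk => ?_
      have hk' : (k:ℝ) ≤ m := by exact_mod_cast (Finset.mem_range.mp hk).le
      rw [← Real.exp_add, abs_of_nonpos (by push_cast; linarith), abs_of_nonpos (by linarith)]
      congr 1; push_cast; ring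
    have h2 : rexp (-a * |(m:ℝ) - (m + 1 : ℕ)|) = rexp (-a) := by
      push_cast; simp
    rw [h1, h2]
    calc _ ≤ rexp (-a) * (rexp (-a) / (1 - rexp (-a))) + rexp (-a) := by gcongr
      _ = _ := by
        have : 1 - rexp (-a) ≠ 0 := by linarith
        field_simp; ring

theorem geo (a : ℝ) (ha : 0 < a) (m : ℕ) :
    ∑ j ∈ Finset.range m, ∑ k ∈ Finset.range m, rexp (-a * |(k:ℝ) - j|)
      ≤ m * (2 * (1 + a) / a) := by
  have hq : rexp (-a) < 1 := by rw [Real.exp_lt_one_iff]; linarith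
  have hq0 := Real.exp_pos (-a)
  have hb : 2 * (rexp (-a) / (1 - rexp (-a))) + 1 ≤ 2 * (1 + a) / a := by
    have h1 : rexp (-a) * (1 + a) ≤ 1 := by
      have := Real.add_one_le_exp a
      calc rexp (-a) * (1 + a) ≤ rexp (-a) * rexp a := by gcongr; linarith
        _ = 1 := by rw [← Real.exp_add]; simp
    have h2 : rexp (-a) / (1 - rexp (-a)) ≤ 1 / a := by
      rw [div_le_div_iff₀ (by linarith) ha]; linarith
    have h3 : 2 * (1 + a) / a = 2 * (1 / a) + 2 := by field_simp
    linarith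
  induction m with
  | zero => simp
  | succ m ih =>
    have hg := geo_aux a ha m
    have hs : ∑ k ∈ Finset.range m, rexp (-a * |(m:ℝ) - k|)
        = ∑ k ∈ Finset.range m, rexp (-a * |(k:ℝ) - m|) := by
      simp_rw [abs_sub_comm]
    simp_rw [Finset.sum_range_succ, Finset.sum_add_distrib]
    rw [hs]
    have h0 : rexp (-a * |(m:ℝ) - m|) = 1 := by simp
    rw [h0]; push_cast
    linarith

/-- `Var(2θ·Y₁₁(T)/T) ≤ [(4/θ)(3 + 7/(4θ)) + 64/θ²]·(1/T)` for `T ≥ 1`. -/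
theorem stmt_9 (θ : ℝ) (hθ : 0 < θ) [IsProbabilityMeasure (ℙ : Measure Ω)]
    (X : Fin 2 → ℝ → Ω → ℝ) (hX : IsOUPair θ X) (T : ℝ) (hT : 1 ≤ T) :
    variance (fun ω => 2 * θ * ouY X 0 0 T ω / T) ℙ
      ≤ ((4 / θ) * (3 + 7 / (4 * θ)) + 64 / θ ^ 2) * (1 / T) := by
  have hT0 : 0 < T := by linarith
  let D : ℕ → ℝ := fun n => T / (n + 1 : ℕ)
  let x : (n : ℕ) → Fin (n + 1) → Ω → ℝ := fun n j ω => X 0 (j * D n) ω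
  let S : ℕ → Ω → ℝ := fun n ω =>
    ∑ j, (x n j ω - (1 / (n + 1 : ℕ)) * ∑ k, x n k ω) * (x n j ω - (1 / (n + 1 : ℕ)) * ∑ k, x n k ω)
  have hD0 : ∀ n, 0 < D n := fun n => by
    have : (0:ℝ) < (n + 1 : ℕ) := by positivity
    exact div_pos hT0 this
  have hDm : ∀ n, ((n + 1 : ℕ) : ℝ) * D n = T := fun n => by
    have : ((n + 1 : ℕ) : ℝ) ≠ 0 := by positivity
    simp only [D]; field_simp
  have hxG : ∀ n (c : Fin (n + 1) → ℝ), IsCG ℙ (fun ω => ∑ j, c j * x n j ω) := by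
    intro n c
    refine ⟨Finset.measurable_fun_sum _ fun j _ => (hX.meas 0 _).const_mul _, ?_⟩
    exact hX.gaussian 0 (n + 1) (fun j => j * D n) c (fun j => by have := hD0 n; positivity)
  have hK : ∀ n (j k : Fin (n + 1)), ∫ ω, x n j ω * x n k ω ∂ℙ
      = (Real.exp (-θ * |k * D n - j * D n|) - Real.exp (-θ * (k * D n + j * D n))) / (2 * θ) := by
    intro n j k
    have := hD0 n
    exact hX.cov 0 _ _ (by positivity) (by positivity)
  have hK2 : ∀ n (j k : Fin (n + 1)), (∫ ω, x n j ω * x n k ω ∂ℙ) ^ 2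
      ≤ rexp (-(2 * θ * D n) * |(k:ℝ) - j|) * (1 / (4 * θ ^ 2)) := by
    intro n j k
    have hd := hD0 n
    rw [hK]
    have h1 : |(k:ℝ) * D n - j * D n| = |(k:ℝ) - j| * D n := by
      rw [← sub_mul, abs_mul, abs_of_pos hd]
    have h2 : Real.exp (-θ * (k * D n + j * D n)) ≤ Real.exp (-θ * |k * D n - j * D n|) := by
      apply Real.exp_le_exp.mpr
      have : |(k:ℝ) * D n - j * D n| ≤ k * D n + j * D n := by
        have h3 : 0 ≤ (k:ℝ) * D n := by positivity
        have h4 : 0 ≤ (j:ℝ) * D n := by positivity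
        rw [abs_le]; constructor <;> linarith
      nlinarith
    have h5 : Real.exp (-θ * |k * D n - j * D n|) ^ 2 = rexp (-(2 * θ * D n) * |(k:ℝ) - j|) := by
      rw [← Real.exp_nat_mul, h1]; congr 1; push_cast; ring
    rw [← h5, div_pow]
    have h6 := Real.exp_pos (-θ * (k * D n + j * D n))
    have h7 : (Real.exp (-θ * |k * D n - j * D n|) - Real.exp (-θ * (k * D n + j * D n))) ^ 2
        ≤ Real.exp (-θ * |k * D n - j * D n|) ^ 2 :=
      pow_le_pow_left₀ (by linarith) (by linarith) 2
    calc _ ≤ Real.exp (-θ * |k * D n - j * D n|) ^ 2 / (2 * θ) ^ 2 := by gcongr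
      _ = _ := by ring
  have hdisc := fun n => discrete_var (P := (ℙ : Measure Ω)) (Nat.succ_ne_zero n) (x n) (hxG n)
  have hvar : ∀ n, variance (S n) ℙ
      ≤ 2 * ((n + 1 : ℕ) * (2 * (1 + 2 * θ * D n) / (2 * θ * D n)) * (1 / (4 * θ ^ 2))) := by
    intro n
    have hd := hD0 n
    refine (hdisc n).2.trans ?_
    refine mul_le_mul_of_nonneg_left ?_ (by norm_num)
    refine (Finset.sum_le_sum fun j _ => Finset.sum_le_sum fun k _ => hK2 n j k).trans ?_
    simp_rw [← Finset.sum_mul]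
    refine mul_le_mul_of_nonneg_right ?_ (by positivity)
    have := geo (2 * θ * D n) (by positivity) (n + 1)
    have hin : ∀ c : ℝ, ∑ k : Fin (n + 1), rexp (-(2 * θ * D n) * |((k : ℕ) : ℝ) - c|)
        = ∑ k ∈ Finset.range (n + 1), rexp (-(2 * θ * D n) * |(k:ℝ) - c|) := fun c =>
      Fin.sum_univ_eq_sum_range (fun k => rexp (-(2 * θ * D n) * |(k:ℝ) - c|)) (n + 1)
    simp_rw [hin]
    rw [Fin.sum_univ_eq_sum_range (fun j => ∑ k ∈ Finset.range (n + 1),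
      rexp (-(2 * θ * D n) * |(k:ℝ) - j|)) (n + 1)]
    exact this
  have hmain : variance (fun ω => 2 * θ * ouY X 0 0 T ω / T) ℙ ≤ 6 / (θ * T) := by
    refine fatou_var (fun n ω => 2 * θ * D n / T * S n ω) _ _ 1 ?_ ?_ ?_ ?_
    · intro n
      exact (hdisc n).1.const_mul _
    · have hDt : Tendsto D atTop (𝓝 0) := by
        have := (tendsto_const_div_atTop_nhds_zero_nat T).comp (tendsto_add_atTop_nat 1)
        exact this
      filter_upwards [hDt.eventually (gt_mem_nhds (show 0 < 1 / θ by positivity))] with n hn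
      have hd := hD0 n
      rw [variance_const_mul]
      have h1 : θ * D n ≤ 1 := by
        rw [lt_div_iff₀ hθ] at hn; linarith
      have hm : (n + 1 : ℕ) = T / D n := by rw [← hDm n]; field_simp
      calc _ ≤ (2 * θ * D n / T) ^ 2 * (2 * ((n + 1 : ℕ) *
            (2 * (1 + 2 * θ * D n) / (2 * θ * D n)) * (1 / (4 * θ ^ 2)))) := by
            gcongr; exact hvar n
        _ = 2 * (1 + 2 * (θ * D n)) / (θ * T) := by
            rw [hm]; field_simp; norm_num
        _ ≤ 6 / (θ * T) := by
            gcongr; linarith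
    · intro n
      have hd := hD0 n
      have hx1 : ∀ j, IsCG ℙ (x n j) := fun j => by
        have := hxG n (fun k => if k = j then 1 else 0)
        simpa using this
      have hS0 : ∀ ω, 0 ≤ S n ω := fun ω => Finset.sum_nonneg fun j _ => mul_self_nonneg _
      have hS1 : ∀ ω, S n ω ≤ ∑ j, x n j ω * x n j ω := fun ω => by
        have := center_sq (fun j => x n j ω) ((1 / (n + 1 : ℕ)) * ∑ k, x n k ω) (by
          have : ((n + 1 : ℕ) : ℝ) ≠ 0 := by positivity
          field_simp)
        simp only [pow_two] at this
        exact this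
      have hI : ∫ ω, S n ω ∂ℙ ≤ (n + 1 : ℕ) * (1 / (2 * θ)) := by
        calc _ ≤ ∫ ω, ∑ j, x n j ω * x n j ω ∂ℙ :=
              integral_mono ((hdisc n).1.integrable (by norm_num))
                (integrable_finsetSum _ fun j _ => (hx1 j).int_mul (hx1 j)) hS1
          _ = ∑ j, ∫ ω, x n j ω * x n j ω ∂ℙ :=
              integral_finsetSum _ fun j _ => (hx1 j).int_mul (hx1 j)
          _ ≤ ∑ j : Fin (n + 1), 1 / (2 * θ) := by
              refine Finset.sum_le_sum fun j _ => ?_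
              rw [hK]
              gcongr
              have := Real.exp_pos (-θ * (j * D n + j * D n))
              simp only [sub_self, abs_zero, mul_zero, Real.exp_zero]
              linarith
          _ = _ := by simp
      rw [integral_const_mul, abs_of_nonneg (mul_nonneg (by positivity) (integral_nonneg hS0))]
      have hm : (n + 1 : ℕ) = T / D n := by rw [← hDm n]; field_simp
      calc _ ≤ 2 * θ * D n / T * ((n + 1 : ℕ) * (1 / (2 * θ))) := by gcongr
        _ = 1 := by rw [hm]; field_simp
    · filter_upwards [hX.cont] with ω hω
      have hc : ContinuousOn (fun t => X 0 t ω) (Set.Icc 0 T) :=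
        (hω 0).mono Set.Icc_subset_Ici_self
      have r1 := riemann_sum hT0 hc
      have r2 := riemann_sum hT0 (hc.mul hc)
      have r3 := ((r2.sub ((r1.mul r1).const_mul (1 / T))).const_mul (2 * θ / T))
      have e : 2 * θ * ouY X 0 0 T ω / T = 2 * θ / T * ((∫ u in (0:ℝ)..T, X 0 u ω * X 0 u ω)
          - 1 / T * ((∫ u in (0:ℝ)..T, X 0 u ω) * ∫ u in (0:ℝ)..T, X 0 u ω)) := by
        simp only [ouY, ouXbar]; field_simp
      rw [e]
      refine r3.congr fun n => ?_
      have hd := hD0 n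
      have hm : ((n + 1 : ℕ) : ℝ) * D n = T := hDm n
      have hm0 : ((n + 1 : ℕ) : ℝ) ≠ 0 := by positivity
      have hS : S n ω = (∑ j, x n j ω * x n j ω)
          - (1 / (n + 1 : ℕ)) * ((∑ j, x n j ω) * ∑ j, x n j ω) := by
        simp only [S]
        generalize hs : ∑ k, x n k ω = s
        have : ∀ j, (x n j ω - 1 / (n + 1 : ℕ) * s) * (x n j ω - 1 / (n + 1 : ℕ) * s)
          = x n j ω * x n j ω - (2 / (n + 1 : ℕ) * s) * x n j ω
            + (1 / (n + 1 : ℕ) * s) * (1 / (n + 1 : ℕ) * s) := fun j => by ring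
        simp_rw [this]
        rw [Finset.sum_add_distrib, Finset.sum_sub_distrib, ← Finset.mul_sum, hs, Finset.sum_const,
          Finset.card_univ, Fintype.card_fin, nsmul_eq_mul]
        field_simp
        ring
      rw [hS]
      change 2 * θ / T * (D n * (∑ j, x n j ω * x n j ω)
        - 1 / T * ((D n * ∑ j, x n j ω) * (D n * ∑ j, x n j ω))) = _
      generalize (∑ j, x n j ω * x n j ω) = s2
      generalize (∑ j, x n j ω) = s
      have hi : (1 / ((n + 1 : ℕ) : ℝ)) = D n / T := by rw [← hm]; field_simp
      rw [hi]; ring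
  refine hmain.trans ?_
  have h1 : 6 / (θ * T) = (6 / θ) * (1 / T) := by field_simp
  rw [h1]
  have h2 : (4 / θ) * (3 + 7 / (4 * θ)) + 64 / θ ^ 2 = 6 / θ + (6 / θ + 71 / θ ^ 2) := by
    field_simp; ring
  rw [h2]
  have : 0 ≤ 6 / θ + 71 / θ ^ 2 := by positivity
  gcongr
  linarith

end
end

section
/- For every θ > 0 there exist constants c(θ) > 0, K(θ) > 0 and T₀(θ) ≥ e, depending only on θ, such that for all T ≥ T₀(θ), P( |2θ·Y₁₁(T)/T − 1| > c(θ)·ln(T)/√T ) ≤ K(θ)/√T. -/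
open MeasureTheory ProbabilityTheory Real Filter Finset
open scoped Topology ENNReal NNReal

noncomputable section

variable {Ω : Type} [MeasureSpace Ω]

lemma aux_log (y : ℝ) (h : |y| ≤ 1 / 2) : Real.exp (-(y + y ^ 2)) ≤ 1 - y := by
  obtain ⟨h1, h2⟩ := abs_le.mp h
  rw [Real.exp_neg]
  have hpos : 0 < 1 - y := by linarith
  rw [inv_le_comm₀ (Real.exp_pos _) hpos, inv_le_iff_one_le_mul₀' hpos]
  rcases le_total y 0 with hy | hy
  · have := Real.add_one_le_exp (y + y ^ 2)
    have h3 : (1 - y) * (y + y ^ 2 + 1) ≤ (1 - y) * Real.exp (y + y ^ 2) := by gcongr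
    have : 0 ≤ -y ^ 3 := by nlinarith [mul_nonneg (neg_nonneg.2 hy) (sq_nonneg y)]
    nlinarith
  · have h0 : 0 ≤ y + y ^ 2 := by positivity
    have := Real.quadratic_le_exp_of_nonneg h0
    have h3 : (1 - y) * (1 + (y + y ^ 2) + (y + y ^ 2) ^ 2 / 2) ≤ (1 - y) * Real.exp (y + y ^ 2) := by
      gcongr
    have h4 : 0 ≤ y ^ 2 * ((1 + y) * (1 - y ^ 2) / 2 - y) := by
      apply mul_nonneg (sq_nonneg _)
      nlinarith [mul_nonneg hy (sub_nonneg.2 h2), mul_nonneg (mul_nonneg hy (sub_nonneg.2 h2)) hy]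
    nlinarith

lemma aux_sqrt (a : ℝ) (h : |a| ≤ 1 / 4) :
    Real.exp (-a) * (√(1 - 2 * a))⁻¹ ≤ Real.exp (2 * a ^ 2) := by
  have h1 := aux_log (2 * a) (by rw [abs_mul]; norm_num; linarith)
  have h2 : Real.exp (-(a + 2 * a ^ 2)) ≤ √(1 - 2 * a) := by
    apply Real.le_sqrt_of_sq_le
    rw [← Real.exp_nat_mul]
    convert h1 using 2
    push_cast; ring
  have h3 : (√(1 - 2 * a))⁻¹ ≤ Real.exp (a + 2 * a ^ 2) := by
    rw [inv_le_comm₀ (lt_of_lt_of_le (Real.exp_pos _) h2) (Real.exp_pos _), ← Real.exp_neg]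
    exact h2
  calc _ ≤ Real.exp (-a) * Real.exp (a + 2 * a ^ 2) := by gcongr
    _ = _ := by rw [← Real.exp_add]; ring_nf

lemma gauss_sq (v : ℝ≥0) (s : ℝ) (h : |s * v| ≤ 1 / 4) :
    Integrable (fun x => Real.exp (s * (x ^ 2 - v))) (gaussianReal 0 v) ∧
    ∫ x, Real.exp (s * (x ^ 2 - v)) ∂(gaussianReal 0 v) ≤ Real.exp (2 * s ^ 2 * v ^ 2) := by
  by_cases hv : v = 0
  · subst hv
    simp only [gaussianReal_zero_var]
    exact ⟨integrable_dirac (by simp), by simp⟩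
  have hv0 : (0 : ℝ) < v := by positivity
  obtain ⟨h1, h2⟩ := abs_le.mp h
  set b : ℝ := 1 / (2 * v) - s with hb
  have hbpos : 0 < b := by
    rw [hb, sub_pos, lt_div_iff₀ (by positivity)]
    linarith
  have key : ∀ x : ℝ, gaussianPDFReal 0 v x * Real.exp (s * (x ^ 2 - v)) =
      ((√(2 * π * v))⁻¹ * Real.exp (-(s * v))) * Real.exp (-b * x ^ 2) := by
    intro x
    rw [gaussianPDFReal_def]
    simp only
    rw [mul_assoc (√(2 * π * v))⁻¹, mul_assoc (√(2 * π * v))⁻¹, ← Real.exp_add, ← Real.exp_add]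
    congr 2
    rw [hb]; field_simp; ring
  constructor
  · rw [gaussianReal_of_var_ne_zero _ hv]
    rw [integrable_withDensity_iff (measurable_gaussianPDF 0 v) (ae_of_all _ fun x => gaussianPDF_lt_top)]
    have : (fun x => Real.exp (s * (x ^ 2 - v)) * (gaussianPDF 0 v x).toReal) =
      fun x => ((√(2 * π * v))⁻¹ * Real.exp (-(s * v))) * Real.exp (-b * x ^ 2) := by
      ext x; rw [← key, toReal_gaussianPDF, mul_comm]
    rw [this]
    exact (integrable_exp_neg_mul_sq hbpos).const_mul _
  · rw [integral_gaussianReal_eq_integral_smul hv]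
    simp only [smul_eq_mul, key]
    rw [integral_const_mul, integral_gaussian]
    have e : (√(2 * π * v))⁻¹ * √(π / b) = (√(1 - 2 * (s * v)))⁻¹ := by
      rw [← Real.sqrt_inv, ← Real.sqrt_inv, ← Real.sqrt_mul (by positivity)]
      congr 1
      have : b = (1 - 2 * (s * v)) / (2 * v) := by rw [hb]; field_simp
      have h5 : 1 - 2 * (s * v) ≠ 0 := by linarith
      rw [this]
      have := Real.pi_pos.ne'
      field_simp
    calc _ = Real.exp (-(s * v)) * ((√(2 * π * v))⁻¹ * √(π / b)) := by ring
      _ ≤ Real.exp (2 * (s * v) ^ 2) := by rw [e]; exact aux_sqrt _ h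
      _ = _ := by ring_nf

lemma diag_exists {n : ℕ} (C : Matrix (Fin n) (Fin n) ℝ) (hC : C.transpose = C) :
    ∃ (U : Matrix (Fin n) (Fin n) ℝ) (d : Fin n → ℝ),
      U * U.transpose = 1 ∧ U.transpose * U = 1 ∧ U * C * U.transpose = Matrix.diagonal d ∧
      ∑ i, d i = ∑ i, C i i ∧ ∑ i, d i ^ 2 = ∑ i, ∑ j, C i j ^ 2 := by
  have hA : C.IsHermitian := by
    rw [Matrix.IsHermitian, Matrix.conjTranspose_eq_transpose_of_trivial, hC]
  set V : Matrix (Fin n) (Fin n) ℝ := hA.eigenvectorUnitary.1 with hV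
  have hVV : V.transpose * V = 1 := by
    have := Unitary.coe_star_mul_self hA.eigenvectorUnitary
    rwa [Matrix.star_eq_conjTranspose, Matrix.conjTranspose_eq_transpose_of_trivial] at this
  have hVV' : V * V.transpose = 1 := mul_eq_one_comm.mp hVV
  have hsp : C = V * Matrix.diagonal hA.eigenvalues * V.transpose := by
    have := hA.spectral_theorem
    rw [Unitary.conjStarAlgAut_apply] at this
    rw [Matrix.star_eq_conjTranspose, Matrix.conjTranspose_eq_transpose_of_trivial] at this
    exact this
  have hd : V.transpose * C * V = Matrix.diagonal hA.eigenvalues := by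
    calc V.transpose * C * V = V.transpose * (V * Matrix.diagonal hA.eigenvalues * V.transpose) * V := by
          rw [← hsp]
      _ = (V.transpose * V) * Matrix.diagonal hA.eigenvalues * (V.transpose * V) := by
          simp only [Matrix.mul_assoc]
      _ = _ := by rw [hVV]; simp
  refine ⟨V.transpose, hA.eigenvalues, by simpa using hVV, by simpa using hVV', by simpa using hd, ?_, ?_⟩
  · have := congrArg Matrix.trace hd
    rw [Matrix.trace_mul_comm, ← Matrix.mul_assoc, hVV', Matrix.one_mul] at this
    simpa [Matrix.trace] using this.symm
  · have h2 : V.transpose * (C * C) * V = Matrix.diagonal hA.eigenvalues * Matrix.diagonal hA.eigenvalues := by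
      rw [← hd]
      calc _ = V.transpose * C * 1 * C * V := by simp [Matrix.mul_assoc]
        _ = _ := by rw [← hVV']; simp only [Matrix.mul_assoc]
    have := congrArg Matrix.trace h2
    rw [Matrix.trace_mul_comm, ← Matrix.mul_assoc, hVV', Matrix.one_mul, Matrix.diagonal_mul_diagonal] at this
    simp only [Matrix.trace, Matrix.diag_apply, Matrix.diagonal_apply_eq, Matrix.mul_apply] at this
    have hs : ∀ i j, C i j = C j i := fun i j => by
      conv_lhs => rw [← hC]
      rfl
    simp only [pow_two]
    rw [← this]
    refine Finset.sum_congr rfl fun i _ => Finset.sum_congr rfl fun j _ => ?_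
    rw [hs j i]

lemma quad_mgf {Ω : Type} [MeasureSpace Ω] [IsProbabilityMeasure (ℙ : Measure Ω)] {n : ℕ}
    (X : Fin n → Ω → ℝ) (hm : ∀ i, Measurable (X i))
    (hg : ∀ c : Fin n → ℝ, ∃ v : ℝ≥0, Measure.map (fun ω => ∑ j, c j * X j ω) ℙ = gaussianReal 0 v)
    (C : Matrix (Fin n) (Fin n) ℝ) (hC : ∀ i j, ∫ ω, X i ω * X j ω ∂ℙ = C i j)
    (s H : ℝ) (hH : ∑ i, ∑ j, C i j ^ 2 ≤ H) (hs : s ^ 2 * H ≤ 1 / 16) :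
    ∫⁻ ω, ENNReal.ofReal (Real.exp (s * (∑ i, X i ω ^ 2 - ∑ i, C i i))) ∂(ℙ : Measure Ω)
      ≤ ENNReal.ofReal (Real.exp (1 / 8)) := by
  have hCs : C.transpose = C := by
    ext i j
    rw [Matrix.transpose_apply, ← hC, ← hC]
    simp only [mul_comm]
  obtain ⟨U, d, hU1, hU2, hUd, htr, hsq⟩ := diag_exists C hCs
  set Z : Fin n → Ω → ℝ := fun i ω => ∑ k, U i k * X k ω with hZ
  have hZm : ∀ i, Measurable (Z i) := fun i => by
    simp only [hZ]; fun_prop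
  have hXL : ∀ i, MemLp (X i) 2 (ℙ : Measure Ω) := fun i => by
    obtain ⟨v, hv⟩ := hg (Pi.single i 1)
    have e : (fun ω => ∑ j, (Pi.single i 1 : Fin n → ℝ) j * X j ω) = X i := by
      ext ω; simp [Pi.single_apply]
    rw [e] at hv
    have : HasGaussianLaw (X i) ℙ := ⟨by rw [hv]; infer_instance⟩
    exact this.memLp_two
  have hlin : ∀ c : Fin n → ℝ, ∃ v : ℝ≥0,
      Measure.map (fun ω => ∑ j, c j * Z j ω) ℙ = gaussianReal 0 v := fun c => by
    obtain ⟨v, hv⟩ := hg (fun k => ∑ j, c j * U j k)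
    refine ⟨v, ?_⟩
    rw [← hv]
    congr 1
    ext ω
    simp only [hZ, Finset.mul_sum, Finset.sum_mul]
    rw [Finset.sum_comm]
    simp only [mul_assoc]
  have hjoint : HasGaussianLaw (fun ω i => Z i ω) (ℙ : Measure Ω) := by
    refine ⟨isGaussian_of_map_eq_gaussianReal fun L => ?_⟩
    obtain ⟨v, hv⟩ := hlin (fun j => L (Pi.single j 1))
    refine ⟨0, v, ?_⟩
    rw [Measure.map_map (by fun_prop) (measurable_pi_lambda _ hZm), ← hv]
    congr 1
    ext ω
    simp only [Function.comp]
    conv_lhs => rw [← Finset.univ_sum_single (fun i => Z i ω)]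
    rw [map_sum]
    refine Finset.sum_congr rfl fun j _ => ?_
    have : (Pi.single j (Z j ω) : Fin n → ℝ) = Z j ω • Pi.single j 1 := by
      rw [← Pi.single_smul]; simp
    rw [this, map_smul, smul_eq_mul, mul_comm]
  have hZL : ∀ i, MemLp (Z i) 2 (ℙ : Measure Ω) := fun i => by
    simp only [hZ]
    exact memLp_finsetSum _ fun k _ => (hXL k).const_mul _
  have hZlaw : ∀ i, ∃ v : ℝ≥0, Measure.map (Z i) ℙ = gaussianReal 0 v := fun i => hg _
  have hZ0 : ∀ i, ∫ ω, Z i ω ∂ℙ = 0 := fun i => by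
    obtain ⟨v, hv⟩ := hZlaw i
    have := integral_map (μ := (ℙ : Measure Ω)) (hZm i).aemeasurable (f := fun x : ℝ => x)
      (by fun_prop)
    rw [← this, hv]
    simp
  have hZZ : ∀ i j, ∫ ω, Z i ω * Z j ω ∂ℙ = Matrix.diagonal d i j := fun i j => by
    rw [← hUd]
    simp only [hZ, Matrix.mul_apply, Matrix.transpose_apply, Finset.sum_mul_sum]
    rw [integral_finsetSum]
    · simp only [Finset.sum_mul]
      rw [Finset.sum_comm]
      refine Finset.sum_congr rfl fun k _ => ?_
      rw [integral_finsetSum]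
      · refine Finset.sum_congr rfl fun l _ => ?_
        rw [← hC k l, ← integral_const_mul, ← integral_mul_const]
        congr 1; ext ω; ring
      · intro l _
        exact ((hXL k).const_mul _).integrable_mul ((hXL l).const_mul _)
    · intro k _
      refine integrable_finsetSum _ fun l _ => ?_
      exact ((hXL k).const_mul _).integrable_mul ((hXL l).const_mul _)
  have hind : iIndepFun Z (ℙ : Measure Ω) := by
    refine hjoint.iIndepFun_of_covariance_eq_zero fun i j hij => ?_
    rw [covariance_eq_sub (hZL i) (hZL j), hZ0, hZ0]
    have := hZZ i j
    rw [Matrix.diagonal_apply_ne _ hij] at this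
    simpa using this
  have hsum : ∀ ω, ∑ i, X i ω ^ 2 = ∑ i, Z i ω ^ 2 := fun ω => by
    have e : (fun i => Z i ω) = U.mulVec (fun i => X i ω) := by
      ext i; simp [hZ, Matrix.mulVec, dotProduct]
    have : (U.mulVec (fun i => X i ω)) ⬝ᵥ (U.mulVec (fun i => X i ω)) =
        (fun i => X i ω) ⬝ᵥ (fun i => X i ω) := by
      rw [Matrix.dotProduct_mulVec, Matrix.vecMul_mulVec, ← Matrix.dotProduct_mulVec, hU2,
        Matrix.one_mulVec]
    rw [← e] at this
    simp only [dotProduct] at this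
    simp only [pow_two]
    exact this.symm
  set W : Fin n → Ω → ℝ := fun i ω => Z i ω ^ 2 - d i with hW
  have hWind : iIndepFun W (ℙ : Measure Ω) :=
    hind.comp (fun i x => x ^ 2 - d i) (fun i => by fun_prop)
  have hWm : ∀ i, Measurable (W i) := fun i => by simp only [hW]; fun_prop
  have hdi : ∀ i, |s * d i| ≤ 1 / 4 := fun i => by
    have h1 : d i ^ 2 ≤ H := by
      refine le_trans ?_ (hsq.trans_le hH)
      exact Finset.single_le_sum (f := fun i => d i ^ 2) (fun i _ => sq_nonneg _) (Finset.mem_univ i)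
    apply abs_le_of_sq_le_sq _ (by norm_num)
    rw [mul_pow]
    have : s ^ 2 * d i ^ 2 ≤ s ^ 2 * H := by gcongr
    linarith
  have hone : ∀ i, Integrable (fun ω => Real.exp (s * W i ω)) (ℙ : Measure Ω) ∧
      mgf (W i) ℙ s ≤ Real.exp (2 * s ^ 2 * d i ^ 2) := fun i => by
    obtain ⟨v, hv⟩ := hZlaw i
    have hvd : (v : ℝ) = d i := by
      have h1 := hZZ i i
      rw [Matrix.diagonal_apply_eq] at h1
      rw [← h1]
      have h2 := variance_map (μ := (ℙ : Measure Ω)) (X := (id : ℝ → ℝ)) (Y := Z i) (by fun_prop)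
        (hZm i).aemeasurable
      rw [hv, variance_id_gaussianReal] at h2
      rw [h2, variance_eq_sub (by simpa using hZL i)]
      simp [hZ0 i, pow_two]
    have h3 := gauss_sq v s (by rw [hvd]; exact hdi i)
    rw [← hv, hvd] at h3
    constructor
    · exact h3.1.comp_measurable (hZm i)
    · refine le_trans (le_of_eq ?_) h3.2
      rw [integral_map (hZm i).aemeasurable (by fun_prop)]
      rfl
  have hfin : ∀ ω, Real.exp (s * (∑ i, X i ω ^ 2 - ∑ i, C i i)) = Real.exp (s * (∑ i, W i) ω) := by
    intro ω
    rw [hsum, ← htr, ← Finset.sum_sub_distrib]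
    simp [hW]
  simp only [hfin]
  rw [← ofReal_integral_eq_lintegral_ofReal
    (hWind.integrable_exp_mul_sum hWm fun i _ => (hone i).1) (ae_of_all _ fun ω => (Real.exp_pos _).le)]
  apply ENNReal.ofReal_le_ofReal
  calc _ = mgf (∑ i, W i) ℙ s := rfl
    _ = ∏ i, mgf (W i) ℙ s := hWind.mgf_sum hWm _
    _ ≤ ∏ i, Real.exp (2 * s ^ 2 * d i ^ 2) :=
        Finset.prod_le_prod (fun i _ => mgf_nonneg) fun i _ => (hone i).2
    _ = Real.exp (2 * s ^ 2 * ∑ i, d i ^ 2) := by rw [← Real.exp_sum, Finset.mul_sum]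
    _ ≤ _ := by
      apply Real.exp_le_exp.2
      rw [hsq]
      have : s ^ 2 * ∑ i, ∑ j, C i j ^ 2 ≤ s ^ 2 * H := by gcongr
      linarith

lemma ker_sum (a : ℝ) (ha : 0 < a) (N j : ℕ) :
    ∑ k : Fin N, Real.exp (-a * |((k : ℕ) : ℝ) - (j : ℝ)|) ≤ 2 * (1 + 1 / a) := by
  rw [Fin.sum_univ_eq_sum_range (fun k : ℕ => Real.exp (-a * |(k : ℝ) - (j : ℝ)|)) N]
  set q : ℝ := 1 - Real.exp (-a) with hq
  have hq1 : a / (1 + a) ≤ q := by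
    have h1 : Real.exp (-a) ≤ 1 / (1 + a) := by
      rw [Real.exp_neg, ← one_div]
      apply one_div_le_one_div_of_le (by positivity)
      linarith [Real.add_one_le_exp a]
    have : a / (1 + a) = 1 - 1 / (1 + a) := by field_simp; ring
    rw [this, hq]; linarith
  have hq0 : 0 < q := lt_of_lt_of_le (by positivity) hq1
  let g : ℕ → ℝ := fun k => if k ≤ j then Real.exp (-a * ((j : ℝ) - k)) else 2 - Real.exp (-a * ((k : ℝ) - j))
  have hg2 : ∀ k, j ≤ k → g k = 2 - Real.exp (-a * ((k : ℝ) - j)) := by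
    intro k hk
    by_cases h : k ≤ j
    · obtain rfl : k = j := le_antisymm h hk
      simp [g]; norm_num
    · simp [g, h]
  have hg1 : ∀ k, k ≤ j → g k = Real.exp (-a * ((j : ℝ) - k)) := by
    intro k hk; simp [g, hk]
  have hstep : ∀ k : ℕ, Real.exp (-a * |(k : ℝ) - (j : ℝ)|) * q ≤ g (k + 1) - g k := by
    intro k
    rcases le_or_gt j k with h | h
    · rw [hg2 k h, hg2 (k + 1) (by omega)]
      have : (j : ℝ) ≤ k := by exact_mod_cast h
      rw [abs_of_nonneg (by linarith), hq]
      have : Real.exp (-a * (((k + 1 : ℕ) : ℝ) - j)) = Real.exp (-a * ((k : ℝ) - j)) * Real.exp (-a) := by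
        rw [← Real.exp_add]; push_cast; ring_nf
      rw [this]; linarith
    · rw [hg1 k h.le, hg1 (k + 1) h]
      have : (k : ℝ) ≤ j := by exact_mod_cast h.le
      rw [abs_of_nonpos (by linarith), neg_sub]
      have e : Real.exp (-a * ((j : ℝ) - (k + 1 : ℕ))) = Real.exp (-a * ((j : ℝ) - k)) * Real.exp a := by
        rw [← Real.exp_add]; push_cast; ring_nf
      rw [e, hq]
      have h2 : Real.exp (-a) * Real.exp a = 1 := by rw [← Real.exp_add]; simp
      have h3 : 1 - Real.exp (-a) ≤ Real.exp a - 1 := by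
        nlinarith [sq_nonneg (Real.exp a - 1), Real.exp_pos (-a), Real.exp_pos a,
          Real.add_one_le_exp a, Real.add_one_le_exp (-a)]
      nlinarith [Real.exp_pos (-a * ((j : ℝ) - k))]
  have hsum : (∑ k ∈ Finset.range N, Real.exp (-a * |(k : ℝ) - (j : ℝ)|)) * q ≤ 2 := by
    rw [Finset.sum_mul]
    refine (Finset.sum_le_sum fun k _ => hstep k).trans ?_
    rw [Finset.sum_range_sub]
    have h0 : 0 ≤ g 0 := by rw [hg1 0 (Nat.zero_le _)]; positivity
    have hN : g N ≤ 2 := by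
      rcases le_total N j with h | h
      · rw [hg1 N h]
        have : (N : ℝ) ≤ j := by exact_mod_cast h
        have : Real.exp (-a * ((j : ℝ) - N)) ≤ 1 := by
          apply Real.exp_le_one_iff.2; nlinarith
        linarith
      · rw [hg2 N h]; linarith [Real.exp_pos (-a * ((N : ℝ) - j))]
    linarith
  calc _ ≤ 2 / q := by rwa [le_div_iff₀ hq0]
    _ ≤ 2 / (a / (1 + a)) := by gcongr
    _ = _ := by field_simp; ring

lemma riemann (f : ℝ → ℝ) (T : ℝ) (hT : 0 < T) (hf : ContinuousOn f (Set.Ici 0)) :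
    Tendsto (fun n : ℕ => T / ((n : ℝ) + 1) * ∑ k : Fin (n + 1), f ((((k : ℕ) : ℝ) + 1) * (T / ((n : ℝ) + 1))))
      atTop (𝓝 (∫ u in (0:ℝ)..T, f u)) := by
  have hfc : ContinuousOn f (Set.Icc 0 T) := hf.mono Set.Icc_subset_Ici_self
  have huc := isCompact_Icc.uniformContinuousOn_of_continuous hfc
  rw [Metric.uniformContinuousOn_iff] at huc
  rw [Metric.tendsto_atTop]
  intro ε hε
  obtain ⟨δ, hδ, hd⟩ := huc (ε / (2 * T)) (by positivity)
  obtain ⟨n0, hn0⟩ := exists_nat_gt (T / δ)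
  refine ⟨n0, fun n hn => ?_⟩
  set h : ℝ := T / ((n : ℝ) + 1) with hh
  have hn1 : (0 : ℝ) < (n : ℝ) + 1 := by positivity
  have hhpos : 0 < h := by positivity
  have hhT : ((n : ℝ) + 1) * h = T := by rw [hh]; field_simp
  have hhδ : h < δ := by
    rw [hh, div_lt_iff₀ hn1]
    rw [div_lt_iff₀ hδ] at hn0
    have : (n0 : ℝ) ≤ n := by exact_mod_cast hn
    nlinarith
  have hsub : ∀ k < n + 1, Set.Icc ((k : ℝ) * h) (((k + 1 : ℕ) : ℝ) * h) ⊆ Set.Icc 0 T := by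
    intro k hk
    apply Set.Icc_subset_Icc (by positivity)
    rw [← hhT]
    have : ((k + 1 : ℕ) : ℝ) ≤ n + 1 := by exact_mod_cast hk
    gcongr
  have hint : ∀ k < n + 1, IntervalIntegrable f volume ((k : ℝ) * h) (((k + 1 : ℕ) : ℝ) * h) := by
    intro k hk
    apply ContinuousOn.intervalIntegrable_of_Icc
    · push_cast; nlinarith
    · exact hfc.mono (hsub k hk)
  have hsplit := intervalIntegral.sum_integral_adjacent_intervals (μ := volume) (f := f)
    (a := fun k : ℕ => (k : ℝ) * h) (n := n + 1) (fun k hk => hint k hk)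
  have e0 : ((n + 1 : ℕ) : ℝ) * h = T := by push_cast; exact hhT
  simp only [Nat.cast_zero, zero_mul, e0] at hsplit
  rw [← hsplit, Fin.sum_univ_eq_sum_range (fun k : ℕ => f (((k : ℝ) + 1) * h)), Finset.mul_sum,
    Real.dist_eq, ← Finset.sum_sub_distrib]
  have hterm : ∀ k ∈ Finset.range (n + 1), |h * f (((k : ℝ) + 1) * h) -
      ∫ x in ((k : ℝ) * h)..(((k + 1 : ℕ) : ℝ) * h), f x| ≤ ε / (2 * T) * h := by
    intro k hk
    have hk' := Finset.mem_range.1 hk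
    have hle : (k : ℝ) * h ≤ ((k + 1 : ℕ) : ℝ) * h := by push_cast; nlinarith
    have e1 : h * f (((k : ℝ) + 1) * h) =
        ∫ x in ((k : ℝ) * h)..(((k + 1 : ℕ) : ℝ) * h), f (((k : ℝ) + 1) * h) := by
      rw [intervalIntegral.integral_const, smul_eq_mul]; push_cast; ring
    rw [e1, ← intervalIntegral.integral_sub (by simp) (hint k hk')]
    have := intervalIntegral.norm_integral_le_of_norm_le_const (a := (k : ℝ) * h)
      (b := ((k + 1 : ℕ) : ℝ) * h) (f := fun x => f (((k : ℝ) + 1) * h) - f x) (C := ε / (2 * T)) ?_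
    · rw [Real.norm_eq_abs] at this
      refine this.trans (le_of_eq ?_)
      rw [abs_of_nonneg (by linarith)]; push_cast; ring
    · intro x hx
      rw [Set.uIoc_of_le hle] at hx
      have hx' : x ∈ Set.Icc ((k : ℝ) * h) (((k + 1 : ℕ) : ℝ) * h) := ⟨hx.1.le, hx.2⟩
      have := hd (((k : ℝ) + 1) * h) (hsub k hk' ⟨by nlinarith, by push_cast; exact le_rfl⟩) x (hsub k hk' hx') (by
        rw [Real.dist_eq, abs_of_nonneg]
        · have := hx.1; nlinarith
        · have := hx.2; push_cast at this; linarith)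
      rw [Real.dist_eq] at this
      exact this.le
  calc _ ≤ ∑ k ∈ Finset.range (n + 1), ε / (2 * T) * h :=
        (Finset.abs_sum_le_sum_abs _ _).trans (Finset.sum_le_sum hterm)
    _ = ε / 2 := by
        rw [Finset.sum_const, Finset.card_range, nsmul_eq_mul]
        push_cast
        rw [show ((n : ℝ) + 1) * (ε / (2 * T) * h) = ε / (2 * T) * (((n : ℝ) + 1) * h) by ring, hhT]
        field_simp
    _ < ε := by linarith

lemma fatou_markov {Ω : Type} [MeasureSpace Ω] (f : ℕ → Ω → ℝ) (g : Ω → ℝ)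
    (hf : ∀ n, Measurable (f n)) (hlim : ∀ᵐ ω ∂(ℙ : Measure Ω), Tendsto (fun n => f n ω) atTop (𝓝 (g ω)))
    (B : ℝ) (hB : ∀ᶠ n in atTop, ∫⁻ ω, ENNReal.ofReal (f n ω) ∂ℙ ≤ ENNReal.ofReal B)
    (a : ℝ) (ha : 0 < a) : (ℙ {ω | a ≤ g ω}) ≤ ENNReal.ofReal (B / a) := by
  have hgm : AEMeasurable g ℙ := aemeasurable_of_tendsto_metrizable_ae atTop (fun n => (hf n).aemeasurable) hlim
  have h1 : ∫⁻ ω, ENNReal.ofReal (g ω) ∂ℙ ≤ ENNReal.ofReal B := by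
    calc ∫⁻ ω, ENNReal.ofReal (g ω) ∂ℙ = ∫⁻ ω, liminf (fun n => ENNReal.ofReal (f n ω)) atTop ∂ℙ := by
          apply lintegral_congr_ae
          filter_upwards [hlim] with ω hω
          exact ((ENNReal.continuous_ofReal.tendsto _).comp hω).liminf_eq.symm
      _ ≤ liminf (fun n => ∫⁻ ω, ENNReal.ofReal (f n ω) ∂ℙ) atTop :=
          lintegral_liminf_le fun n => (hf n).ennreal_ofReal
      _ ≤ _ := liminf_le_of_frequently_le' hB.frequently
  have h2 := mul_meas_ge_le_lintegral₀ hgm.ennreal_ofReal (ENNReal.ofReal a)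
  have h3 : (ℙ {ω | a ≤ g ω}) ≤ ℙ {ω | ENNReal.ofReal a ≤ ENNReal.ofReal (g ω)} :=
    measure_mono fun ω hω => ENNReal.ofReal_le_ofReal hω
  rw [ENNReal.ofReal_div_of_pos ha, ENNReal.le_div_iff_mul_le (by simp [ha]) (by simp), mul_comm]
  calc _ ≤ ENNReal.ofReal a * ℙ {ω | ENNReal.ofReal a ≤ ENNReal.ofReal (g ω)} := by gcongr
    _ ≤ _ := h2.trans h1

lemma cov_bounds (θ : ℝ) (hθ : 0 < θ) (s t : ℝ) (hs : 0 ≤ s) (ht : 0 ≤ t) :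
    0 ≤ (Real.exp (-θ * |t - s|) - Real.exp (-θ * (t + s))) / (2 * θ) ∧
    (Real.exp (-θ * |t - s|) - Real.exp (-θ * (t + s))) / (2 * θ) ≤ Real.exp (-θ * |t - s|) / (2 * θ) := by
  constructor
  · apply div_nonneg _ (by positivity)
    rw [sub_nonneg]
    apply Real.exp_le_exp.2
    have : |t - s| ≤ t + s := abs_le.2 ⟨by linarith, by linarith⟩
    nlinarith
  · gcongr
    linarith [Real.exp_pos (-θ * (t + s))]

/-- The sampling grid. -/
def grid (T : ℝ) (n : ℕ) (k : Fin (n + 1)) : ℝ := (((k : ℕ) : ℝ) + 1) * (T / ((n : ℝ) + 1))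

lemma grid_nonneg {T : ℝ} (hT : 0 < T) (n : ℕ) (k : Fin (n + 1)) : 0 ≤ grid T n k := by
  unfold grid; positivity

lemma grid_ker (T : ℝ) (hT : 0 < T) (n : ℕ) (b : ℝ) (hb : 0 < b) (j : Fin (n + 1)) :
    ∑ k, Real.exp (-b * |grid T n k - grid T n j|) ≤ 2 * (1 + 1 / (b * (T / ((n : ℝ) + 1)))) := by
  have hh : 0 < T / ((n : ℝ) + 1) := by positivity
  refine le_trans (le_of_eq ?_) (ker_sum (b * (T / ((n : ℝ) + 1))) (by positivity) (n + 1) j)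
  refine Finset.sum_congr rfl fun k _ => ?_
  have : grid T n k - grid T n j = (T / ((n : ℝ) + 1)) * (((k : ℕ) : ℝ) - ((j : ℕ) : ℝ)) := by
    unfold grid; ring
  rw [this, abs_mul, abs_of_pos hh]
  ring_nf

lemma ou_memLp {Ω : Type} [MeasureSpace Ω] {θ : ℝ} [IsProbabilityMeasure (ℙ : Measure Ω)]
    {X : Fin 2 → ℝ → Ω → ℝ} (hX : IsOUPair θ X) (t : ℝ) (ht : 0 ≤ t) :
    MemLp (X 0 t) 2 (ℙ : Measure Ω) := by
  obtain ⟨v, hv⟩ := hX.gaussian 0 1 (fun _ => t) (fun _ => 1) (fun _ => ht)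
  have e : (fun ω => ∑ j : Fin 1, (1 : ℝ) * X 0 t ω) = X 0 t := by
    ext ω; simp
  rw [e] at hv
  have : HasGaussianLaw (X 0 t) ℙ := ⟨by rw [hv]; infer_instance⟩
  exact this.memLp_two

/-- Exponential moment bound for Riemann sums. -/
lemma ou_exp {Ω : Type} [MeasureSpace Ω] {θ : ℝ} (hθ : 0 < θ) [IsProbabilityMeasure (ℙ : Measure Ω)]
    {X : Fin 2 → ℝ → Ω → ℝ} (hX : IsOUPair θ X) (T : ℝ) (hT : 0 < T) (n : ℕ)
    (hn : T / ((n : ℝ) + 1) ≤ 1 / (2 * θ)) (s : ℝ) (hs : s ^ 2 * (T / (2 * θ ^ 3)) ≤ 1 / 16) :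
    ∫⁻ ω, ENNReal.ofReal (Real.exp (s * (T / ((n : ℝ) + 1) * ∑ k, X 0 (grid T n k) ω ^ 2 - T / (2 * θ)))) ∂(ℙ : Measure Ω)
      ≤ ENNReal.ofReal (Real.exp (1 / 8 + |s| / θ ^ 2)) := by
  set h : ℝ := T / ((n : ℝ) + 1) with hh
  have hn1 : (0 : ℝ) < (n : ℝ) + 1 := by positivity
  have hh0 : 0 < h := by positivity
  have hhT : ((n : ℝ) + 1) * h = T := by rw [hh]; field_simp
  set C : Matrix (Fin (n + 1)) (Fin (n + 1)) ℝ := fun i j =>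
    h * ((Real.exp (-θ * |grid T n j - grid T n i|) - Real.exp (-θ * (grid T n j + grid T n i))) / (2 * θ)) with hC
  have hsq : √h * √h = h := Real.mul_self_sqrt hh0.le
  have hHS : ∑ i, ∑ j, C i j ^ 2 ≤ T / (2 * θ ^ 3) := by
    have h1 : ∀ i, ∑ j, C i j ^ 2 ≤ h ^ 2 / (4 * θ ^ 2) * (2 * (1 + 1 / (2 * θ * h))) := fun i => by
      calc ∑ j, C i j ^ 2 ≤ ∑ j, h ^ 2 / (4 * θ ^ 2) * Real.exp (-(2 * θ) * |grid T n j - grid T n i|) := by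
            refine Finset.sum_le_sum fun j _ => ?_
            obtain ⟨ha, hb⟩ := cov_bounds θ hθ (grid T n i) (grid T n j) (grid_nonneg hT n i) (grid_nonneg hT n j)
            simp only [hC]
            rw [mul_pow]
            have e : h ^ 2 / (4 * θ ^ 2) * Real.exp (-(2 * θ) * |grid T n j - grid T n i|)
                = h ^ 2 * (Real.exp (-θ * |grid T n j - grid T n i|) / (2 * θ)) ^ 2 := by
              have e0 : Real.exp (-(2 * θ) * |grid T n j - grid T n i|) =
                  Real.exp (-θ * |grid T n j - grid T n i|) ^ 2 := by
                rw [← Real.exp_nat_mul]; push_cast; ring_nf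
              rw [e0, div_pow (Real.exp _)]
              ring
            rw [e]
            gcongr
        _ ≤ _ := by
            rw [← Finset.mul_sum]
            gcongr
            exact grid_ker T hT n (2 * θ) (by positivity) i
    calc _ ≤ ∑ i : Fin (n + 1), h ^ 2 / (4 * θ ^ 2) * (2 * (1 + 1 / (2 * θ * h))) :=
          Finset.sum_le_sum fun i _ => h1 i
      _ = (((n : ℝ) + 1) * h) * (h + 1 / (2 * θ)) / (2 * θ ^ 2) := by
          rw [Finset.sum_const, Finset.card_univ, Fintype.card_fin, nsmul_eq_mul]
          push_cast; field_simp; ring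
      _ ≤ T * (1 / (2 * θ) + 1 / (2 * θ)) / (2 * θ ^ 2) := by rw [hhT]; gcongr
      _ = _ := by field_simp; ring
  have hq := quad_mgf (fun k ω => √h * X 0 (grid T n k) ω) (fun k => (hX.meas 0 _).const_mul _)
    (fun c => by
      obtain ⟨v, hv⟩ := hX.gaussian 0 (n + 1) (grid T n) (fun k => c k * √h) (grid_nonneg hT n)
      refine ⟨v, ?_⟩
      rw [← hv]
      simp only [mul_assoc]) C
    (fun i j => by
      simp only [hC]
      rw [← hX.cov 0 _ _ (grid_nonneg hT n i) (grid_nonneg hT n j), ← integral_const_mul]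
      congr 1
      ext ω
      calc _ = (√h * √h) * (X 0 (grid T n i) ω * X 0 (grid T n j) ω) := by ring
        _ = _ := by rw [hsq]) s _ hHS hs
  have htr : |∑ i, C i i - T / (2 * θ)| ≤ 1 / θ ^ 2 := by
    have e1 : ∑ i, C i i - T / (2 * θ) = - (h / (2 * θ) * ∑ i, Real.exp (-(2 * θ) * grid T n i)) := by
      have : ∀ i, C i i = h / (2 * θ) - h / (2 * θ) * Real.exp (-(2 * θ) * grid T n i) := fun i => by
        simp only [hC, sub_self, abs_zero, mul_zero, Real.exp_zero]
        rw [show -θ * (grid T n i + grid T n i) = -(2 * θ) * grid T n i by ring]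
        field_simp
      simp only [this]
      rw [Finset.sum_sub_distrib, Finset.sum_const, Finset.card_univ, Fintype.card_fin, nsmul_eq_mul,
        ← Finset.mul_sum, ← hhT]
      push_cast; field_simp; ring
    have e2 : ∑ i, Real.exp (-(2 * θ) * grid T n i) ≤ 2 * (1 + 1 / (2 * θ * h)) := by
      refine le_trans (Finset.sum_le_sum fun i _ => ?_) (grid_ker T hT n (2 * θ) (by positivity) 0)
      apply Real.exp_le_exp.2
      have : |grid T n i - grid T n 0| ≤ grid T n i := by
        unfold grid
        rw [abs_of_nonneg] <;> simp <;> nlinarith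
      nlinarith
    rw [e1, abs_neg, abs_of_nonneg (by positivity)]
    calc _ ≤ h / (2 * θ) * (2 * (1 + 1 / (2 * θ * h))) := by gcongr
      _ = (h + 1 / (2 * θ)) / θ := by field_simp
      _ ≤ (1 / (2 * θ) + 1 / (2 * θ)) / θ := by gcongr
      _ = _ := by field_simp; ring
  have hpt : ∀ ω, Real.exp (s * (h * ∑ k, X 0 (grid T n k) ω ^ 2 - T / (2 * θ))) ≤
      Real.exp (|s| / θ ^ 2) * Real.exp (s * (∑ k, (√h * X 0 (grid T n k) ω) ^ 2 - ∑ i, C i i)) := by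
    intro ω
    rw [← Real.exp_add]
    apply Real.exp_le_exp.2
    have e : ∑ k, (√h * X 0 (grid T n k) ω) ^ 2 = h * ∑ k, X 0 (grid T n k) ω ^ 2 := by
      rw [Finset.mul_sum]
      refine Finset.sum_congr rfl fun k _ => ?_
      rw [mul_pow, Real.sq_sqrt hh0.le]
    rw [e]
    have h1 : s * (∑ i, C i i - T / (2 * θ)) ≤ |s| / θ ^ 2 := by
      calc _ ≤ |s * (∑ i, C i i - T / (2 * θ))| := le_abs_self _
        _ = |s| * |∑ i, C i i - T / (2 * θ)| := abs_mul _ _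
        _ ≤ |s| * (1 / θ ^ 2) := by gcongr
        _ = _ := by ring
    linarith
  calc _ ≤ ∫⁻ ω, ENNReal.ofReal (Real.exp (|s| / θ ^ 2)) *
        ENNReal.ofReal (Real.exp (s * (∑ k, (√h * X 0 (grid T n k) ω) ^ 2 - ∑ i, C i i))) ∂(ℙ : Measure Ω) := by
        refine lintegral_mono fun ω => ?_
        rw [← ENNReal.ofReal_mul (Real.exp_pos _).le]
        exact ENNReal.ofReal_le_ofReal (hpt ω)
    _ = ENNReal.ofReal (Real.exp (|s| / θ ^ 2)) * ∫⁻ ω,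
        ENNReal.ofReal (Real.exp (s * (∑ k, (√h * X 0 (grid T n k) ω) ^ 2 - ∑ i, C i i))) ∂(ℙ : Measure Ω) :=
        lintegral_const_mul' _ _ ENNReal.ofReal_ne_top
    _ ≤ ENNReal.ofReal (Real.exp (|s| / θ ^ 2)) * ENNReal.ofReal (Real.exp (1 / 8)) := by gcongr
    _ = _ := by
        rw [← ENNReal.ofReal_mul (Real.exp_pos _).le, ← Real.exp_add, add_comm]

/-- Second moment of the Riemann sums of the empirical mean. -/
lemma ou_mean {Ω : Type} [MeasureSpace Ω] {θ : ℝ} (hθ : 0 < θ) [IsProbabilityMeasure (ℙ : Measure Ω)]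
    {X : Fin 2 → ℝ → Ω → ℝ} (hX : IsOUPair θ X) (T : ℝ) (hT : 0 < T) (n : ℕ)
    (hn : T / ((n : ℝ) + 1) ≤ 1 / (2 * θ)) :
    ∫⁻ ω, ENNReal.ofReal ((1 / T * (T / ((n : ℝ) + 1) * ∑ k, X 0 (grid T n k) ω)) ^ 2) ∂(ℙ : Measure Ω)
      ≤ ENNReal.ofReal (2 / (θ ^ 2 * T)) := by
  set h : ℝ := T / ((n : ℝ) + 1) with hh
  have hn1 : (0 : ℝ) < (n : ℝ) + 1 := by positivity
  have hh0 : 0 < h := by positivity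
  have hhT : ((n : ℝ) + 1) * h = T := by rw [hh]; field_simp
  have hint : ∀ i j : Fin (n + 1), Integrable (fun ω => X 0 (grid T n i) ω * X 0 (grid T n j) ω) (ℙ : Measure Ω) :=
    fun i j => (ou_memLp hX _ (grid_nonneg hT n i)).integrable_mul (ou_memLp hX _ (grid_nonneg hT n j))
  have e : (fun ω => (1 / T * (h * ∑ k, X 0 (grid T n k) ω)) ^ 2) =
      fun ω => (h / T) ^ 2 * ∑ i, ∑ j, X 0 (grid T n i) ω * X 0 (grid T n j) ω := by
    ext ω
    rw [← Finset.sum_mul_sum]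
    ring
  have hI : Integrable (fun ω => ∑ i, ∑ j, X 0 (grid T n i) ω * X 0 (grid T n j) ω) (ℙ : Measure Ω) :=
    integrable_finsetSum _ fun i _ => integrable_finsetSum _ fun j _ => hint i j
  rw [← ofReal_integral_eq_lintegral_ofReal (by rw [e]; exact hI.const_mul _)
    (ae_of_all _ fun ω => sq_nonneg _)]
  apply ENNReal.ofReal_le_ofReal
  rw [e, integral_const_mul, integral_finsetSum _ (fun i _ => integrable_finsetSum _ fun j _ => hint i j)]
  have h1 : ∀ i : Fin (n + 1), ∫ ω, ∑ j, X 0 (grid T n i) ω * X 0 (grid T n j) ω ∂ℙ ≤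
      1 / (2 * θ) * (2 * (1 + 1 / (θ * h))) := fun i => by
    rw [integral_finsetSum _ (fun j _ => hint i j)]
    calc _ ≤ ∑ j, 1 / (2 * θ) * Real.exp (-θ * |grid T n j - grid T n i|) := by
          refine Finset.sum_le_sum fun j _ => ?_
          rw [hX.cov 0 _ _ (grid_nonneg hT n i) (grid_nonneg hT n j)]
          refine (cov_bounds θ hθ (grid T n i) (grid T n j) (grid_nonneg hT n i) (grid_nonneg hT n j)).2.trans
            (le_of_eq ?_)
          ring
      _ ≤ _ := by
          rw [← Finset.mul_sum]
          gcongr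
          exact grid_ker T hT n θ hθ i
  calc _ ≤ (h / T) ^ 2 * ∑ i : Fin (n + 1), 1 / (2 * θ) * (2 * (1 + 1 / (θ * h))) := by
        gcongr with i _
        exact h1 i
    _ = (((n : ℝ) + 1) * h) * (h + 1 / θ) / (T ^ 2 * θ) := by
        rw [Finset.sum_const, Finset.card_univ, Fintype.card_fin, nsmul_eq_mul]
        push_cast; field_simp
    _ = (h + 1 / θ) / (T * θ) := by rw [hhT]; field_simp
    _ ≤ (1 / (2 * θ) + 1 / θ) / (T * θ) := by gcongr
    _ ≤ _ := by
        rw [div_le_div_iff₀ (by positivity) (by positivity)]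
        have : 1 / (2 * θ) + 1 / θ ≤ 2 / θ := by
          have : 2 / θ - (1 / (2 * θ) + 1 / θ) = 1 / (2 * θ) := by field_simp; ring
          have : 0 < 1 / (2 * θ) := by positivity
          linarith
        calc _ ≤ (2 / θ) * (θ ^ 2 * T) := by gcongr
          _ = _ := by field_simp

/-- there exist `c(θ) > 0`, `K(θ) > 0` and `T₀(θ) ≥ e` such that for
all `T ≥ T₀(θ)`, `P(|2θ·Y₁₁(T)/T − 1| > c(θ)·ln(T)/√T) ≤ K(θ)/√T`. -/
theorem stmt_10 (θ : ℝ) (hθ : 0 < θ) [IsProbabilityMeasure (ℙ : Measure Ω)]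
    (X : Fin 2 → ℝ → Ω → ℝ) (hX : IsOUPair θ X) :
    ∃ c K T₀ : ℝ, 0 < c ∧ 0 < K ∧ Real.exp 1 ≤ T₀ ∧ ∀ T : ℝ, T₀ ≤ T →
      (ℙ {ω | c * Real.log T / Real.sqrt T < |2 * θ * ouY X 0 0 T ω / T - 1|}).toReal
        ≤ K / Real.sqrt T := by
  set lam : ℝ := √(θ ^ 3 / 8) with hlam
  have hlam0 : 0 < lam := by positivity
  have hlamsq : lam ^ 2 = θ ^ 3 / 8 := Real.sq_sqrt (by positivity)
  set M : ℝ := Real.exp (1 / 8 + lam / θ ^ 2) with hM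
  have hM0 : 0 < M := Real.exp_pos _
  set c : ℝ := 2 * θ / lam with hc
  have hc0 : 0 < c := by positivity
  refine ⟨c, 2 * M + 8 / (θ * c), Real.exp 1, hc0, by positivity, le_rfl, fun T hTe => ?_⟩
  have hT1 : 1 ≤ T := le_trans (Real.one_le_exp (by norm_num)) hTe
  have hT : 0 < T := by linarith
  have hlog : 1 ≤ Real.log T := by rwa [Real.le_log_iff_exp_le hT]
  set r : ℝ := √T with hr
  have hr1 : 1 ≤ r := Real.one_le_sqrt.2 hT1
  have hr0 : 0 < r := by linarith
  have hrr : r ^ 2 = T := Real.sq_sqrt hT.le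
  have hexp : Real.exp (Real.log T / 2) = r := by
    rw [hr, Real.sqrt_eq_rpow, Real.rpow_def_of_pos hT]; ring_nf
  have hev : ∀ᶠ n : ℕ in atTop, T / ((n : ℝ) + 1) ≤ 1 / (2 * θ) := by
    have h1 : Tendsto (fun n : ℕ => T / ((n : ℝ) + 1)) atTop (𝓝 0) :=
      tendsto_const_nhds.div_atTop (tendsto_atTop_add_const_right _ _ tendsto_natCast_atTop_atTop)
    exact (h1.eventually (gt_mem_nhds (by positivity : (0 : ℝ) < 1 / (2 * θ)))).mono fun n hn => le_of_lt hn
  set Q : Ω → ℝ := fun ω => ∫ u in (0:ℝ)..T, X 0 u ω * X 0 u ω with hQ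
  have hQlim : ∀ᵐ ω ∂(ℙ : Measure Ω), Tendsto
      (fun n : ℕ => T / ((n : ℝ) + 1) * ∑ k, X 0 (grid T n k) ω ^ 2) atTop (𝓝 (Q ω)) := by
    filter_upwards [hX.cont] with ω hω
    have := riemann (fun t => X 0 t ω * X 0 t ω) T hT ((hω 0).mul (hω 0))
    simpa only [grid, pow_two] using this
  have hMlim : ∀ᵐ ω ∂(ℙ : Measure Ω), Tendsto
      (fun n : ℕ => T / ((n : ℝ) + 1) * ∑ k, X 0 (grid T n k) ω) atTop
      (𝓝 (∫ u in (0:ℝ)..T, X 0 u ω)) := by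
    filter_upwards [hX.cont] with ω hω
    have := riemann (fun t => X 0 t ω) T hT (hω 0)
    simpa only [grid] using this
  have hmeas := hX.meas 0
  have tail : ∀ s : ℝ, |s| = lam / r →
      ℙ {ω | r ≤ Real.exp (s * (Q ω - T / (2 * θ)))} ≤ ENNReal.ofReal (M / r) := by
    intro s hs
    refine fatou_markov
      (fun n ω => Real.exp (s * (T / ((n : ℝ) + 1) * ∑ k, X 0 (grid T n k) ω ^ 2 - T / (2 * θ)))) _
      (fun n => by fun_prop) ?_ M ?_ r hr0
    · filter_upwards [hQlim] with ω hω
      exact (Real.continuous_exp.tendsto _).comp ((hω.sub_const _).const_mul _)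
    · filter_upwards [hev] with n hn
      refine (ou_exp hθ hX T hT n hn s ?_).trans ?_
      · rw [← sq_abs, hs, div_pow, hlamsq, hrr]
        apply le_of_eq
        field_simp
        norm_num
      · apply ENNReal.ofReal_le_ofReal
        apply Real.exp_le_exp.2
        rw [hs]
        have : lam / r ≤ lam := div_le_self hlam0.le hr1
        gcongr
  have tailM : ℙ {ω | c / (4 * θ * r) ≤ ouXbar X 0 T ω ^ 2} ≤
      ENNReal.ofReal (2 / (θ ^ 2 * T) / (c / (4 * θ * r))) := by
    refine fatou_markov
      (fun n ω => (1 / T * (T / ((n : ℝ) + 1) * ∑ k, X 0 (grid T n k) ω)) ^ 2) _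
      (fun n => by fun_prop) ?_ _ ?_ _ (by positivity)
    · filter_upwards [hMlim] with ω hω
      exact (hω.const_mul _).pow 2
    · filter_upwards [hev] with n hn
      exact ou_mean hθ hX T hT n hn
  have hsub : {ω | c * Real.log T / r < |2 * θ * ouY X 0 0 T ω / T - 1|} ⊆
      ({ω | r ≤ Real.exp (lam / r * (Q ω - T / (2 * θ)))} ∪
       {ω | r ≤ Real.exp (-(lam / r) * (Q ω - T / (2 * θ)))}) ∪
       {ω | c / (4 * θ * r) ≤ ouXbar X 0 T ω ^ 2} := by
    intro ω hω
    by_contra hcon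
    simp only [Set.mem_union, Set.mem_setOf_eq, not_or, not_le] at hcon hω
    obtain ⟨⟨h1, h2⟩, h3⟩ := hcon
    rw [← hexp] at h1 h2
    have h1' := Real.exp_lt_exp.1 h1
    have h2' := Real.exp_lt_exp.1 h2
    rw [hexp] at h1' h2'
    set D : ℝ := Q ω - T / (2 * θ) with hD
    set x : ℝ := ouXbar X 0 T ω with hx
    have e : 2 * θ * ouY X 0 0 T ω / T - 1 = 2 * θ / T * D - 2 * θ * x ^ 2 := by
      have : ouY X 0 0 T ω = Q ω - T * x * x := rfl
      rw [this, hD]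
      field_simp
      ring
    have habs : |lam / r * D| < Real.log T / 2 := abs_lt.2 ⟨by linarith, h1'⟩
    have e2 : 2 * θ / T * D = c / r * (lam / r * D) := by
      rw [hc, ← hrr]; field_simp
    have hA : |2 * θ / T * D| ≤ c / r * (Real.log T / 2) := by
      rw [e2, abs_mul, abs_of_pos (by positivity : 0 < c / r)]
      gcongr
    have hB : |2 * θ * x ^ 2| ≤ c / r * (Real.log T / 2) := by
      rw [abs_of_nonneg (by positivity)]
      calc 2 * θ * x ^ 2 ≤ 2 * θ * (c / (4 * θ * r)) := by gcongr
        _ = c / r * (1 / 2) := by field_simp; norm_num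
        _ ≤ _ := by gcongr
    rw [e] at hω
    have := abs_sub (2 * θ / T * D) (2 * θ * x ^ 2)
    have e3 : c * Real.log T / r = c / r * (Real.log T / 2) + c / r * (Real.log T / 2) := by ring
    linarith
  have hfinal : ℙ {ω | c * Real.log T / r < |2 * θ * ouY X 0 0 T ω / T - 1|} ≤
      ENNReal.ofReal ((2 * M + 8 / (θ * c)) / r) := by
    have hp : 0 < lam / r := by positivity
    calc _ ≤ _ := measure_mono hsub
      _ ≤ _ := measure_union_le _ _
      _ ≤ _ := add_le_add (measure_union_le _ _) le_rfl
      _ ≤ (ENNReal.ofReal (M / r) + ENNReal.ofReal (M / r)) +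
          ENNReal.ofReal (2 / (θ ^ 2 * T) / (c / (4 * θ * r))) :=
          add_le_add (add_le_add (tail _ (abs_of_pos hp)) (tail _ (by rw [abs_neg, abs_of_pos hp]))) tailM
      _ = _ := by
          rw [← ENNReal.ofReal_add (by positivity) (by positivity),
            ← ENNReal.ofReal_add (by positivity) (by positivity)]
          congr 1
          rw [← hrr]
          field_simp
          ring
  exact ENNReal.toReal_le_of_le_ofReal (by positivity) hfinal

end
end
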